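/- Let f = id ∗ 1_P, where 1_P is the indicator function of the set of primes, i.e. f(n) = ∑_{ab = n} a · 1_P(b). Then ∑_{n ≤ x} f(⌊x/n⌋)/⌊x/n⌋ = x · ∑_{m ≥ 1} f(m)/(m²(m+1)) + O(x^{1/3} log x) as x → ∞. -/

import Mathlib

open Filter Finset

/-- `f = id ∗ 1_P`, i.e. `f(n) = ∑_{p ∣ n, p prime} n/p`. -/
noncomputable def idConvPrimeIndicator (n : ℕ) : ℝ :=
  ∑ d ∈ n.divisors.filter Nat.Prime, ((n / d : ℕ) : ℝ)

/-- The additive character `t ↦ e^{2πit}`. -/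
noncomputable def unitPhase (t : ℝ) : ℂ := Complex.exp ((2 * Real.pi * t : ℝ) * Complex.I)

lemma norm_unitPhase (t : ℝ) : ‖unitPhase t‖ = 1 := Complex.norm_exp_ofReal_mul_I _

lemma unitPhase_add (s t : ℝ) : unitPhase (s + t) = unitPhase s * unitPhase t := by
  unfold unitPhase
  rw [← Complex.exp_add]
  congr 1
  push_cast
  ring

lemma unitPhase_sub_intCast (t : ℝ) (m : ℤ) : unitPhase (t - m) = unitPhase t := by
  unfold unitPhase
  rw [Complex.exp_eq_exp_iff_exists_int]
  refine ⟨-m, ?_⟩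
  push_cast
  ring

lemma unitPhase_eq_cos_add_sin (t : ℝ) :
    unitPhase t = (Real.cos (2 * Real.pi * t) : ℂ) + (Real.sin (2 * Real.pi * t) : ℂ) * Complex.I := by
  unfold unitPhase
  rw [Complex.exp_mul_I, ← Complex.ofReal_cos, ← Complex.ofReal_sin]

lemma unitPhase_re (t : ℝ) : (unitPhase t).re = Real.cos (2 * Real.pi * t) := by
  rw [unitPhase, Complex.exp_ofReal_mul_I_re]

lemma norm_unitPhase_sub_one_le (t : ℝ) : ‖unitPhase t - 1‖ ≤ 2 * Real.pi * |t| := by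
  have h := Real.norm_exp_I_mul_ofReal_sub_one_le (x := 2 * Real.pi * t)
  rw [mul_comm Complex.I] at h
  refine h.trans (le_of_eq ?_)
  rw [Real.norm_eq_abs, abs_mul, abs_of_pos Real.two_pi_pos]

/-- Half the cotangent of `πt`, the imaginary part of `1 / (1 - e^{2πit})`. -/
noncomputable def halfCotPi (t : ℝ) : ℝ :=
  Real.cos (Real.pi * t) / (2 * Real.sin (Real.pi * t))

lemma two_mul_le_sin_pi_mul {δ t : ℝ} (hδ : 0 < δ) (h1 : δ ≤ t) (h2 : t ≤ 1 - δ) :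
    2 * δ ≤ Real.sin (Real.pi * t) := by
  have hpi := Real.pi_pos
  rcases le_total t (1 / 2) with h | h
  · have := Real.mul_le_sin (x := Real.pi * t) (by nlinarith) (by nlinarith)
    have e : 2 / Real.pi * (Real.pi * t) = 2 * t := by field_simp
    linarith
  · have := Real.mul_le_sin (x := Real.pi - Real.pi * t) (by nlinarith) (by nlinarith)
    rw [Real.sin_pi_sub] at this
    have e : 2 / Real.pi * (Real.pi - Real.pi * t) = 2 * (1 - t) := by field_simp
    linarith

lemma abs_halfCotPi_le {δ t : ℝ} (hδ : 0 < δ) (h1 : δ ≤ t) (h2 : t ≤ 1 - δ) :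
    |halfCotPi t| ≤ 1 / (4 * δ) := by
  have hs := two_mul_le_sin_pi_mul hδ h1 h2
  unfold halfCotPi
  rw [abs_div, abs_of_pos (show 0 < 2 * Real.sin (Real.pi * t) by linarith)]
  exact div_le_div₀ zero_le_one (Real.abs_cos_le_one _) (by linarith) (by linarith)

lemma halfCotPi_anti {s t : ℝ} (h0 : 0 < s) (hst : s ≤ t) (h1 : t < 1) :
    halfCotPi t ≤ halfCotPi s := by
  have hpi := Real.pi_pos
  have hs : 0 < Real.sin (Real.pi * s) :=
    Real.sin_pos_of_pos_of_lt_pi (by positivity) (by nlinarith)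
  have ht : 0 < Real.sin (Real.pi * t) :=
    Real.sin_pos_of_pos_of_lt_pi (by nlinarith) (by nlinarith)
  have hd : 0 ≤ Real.sin (Real.pi * t - Real.pi * s) :=
    Real.sin_nonneg_of_nonneg_of_le_pi (by nlinarith) (by nlinarith)
  rw [Real.sin_sub] at hd
  unfold halfCotPi
  rw [div_le_div_iff₀ (by positivity) (by positivity)]
  nlinarith

lemma half_add_halfCotPi_mul {t : ℝ} (h0 : 0 < t) (h1 : t < 1) :
    (1 / 2 + (halfCotPi t : ℂ) * Complex.I) * (1 - unitPhase t) = 1 := by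
  have hpi := Real.pi_pos
  have hs : 0 < Real.sin (Real.pi * t) :=
    Real.sin_pos_of_pos_of_lt_pi (by positivity) (by nlinarith)
  rw [unitPhase_eq_cos_add_sin, show 2 * Real.pi * t = 2 * (Real.pi * t) by ring,
    Real.cos_two_mul, Real.sin_two_mul]
  unfold halfCotPi
  have hsq := Real.sin_sq_add_cos_sq (Real.pi * t)
  generalize Real.sin (Real.pi * t) = S at *
  generalize Real.cos (Real.pi * t) = C at *
  have hS : (S : ℂ) ≠ 0 := by exact_mod_cast hs.ne'
  have hsq' : (S : ℂ) ^ 2 + (C : ℂ) ^ 2 = 1 := by exact_mod_cast hsq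
  push_cast
  field_simp
  linear_combination (-2 * S * C ^ 2 : ℂ) * Complex.I_sq - 2 * Complex.I * hsq' * C

/-- The Kusmin–Landau inequality: if the increments of `u` are monotone and stay at distance at
least `δ` from the integers, then the exponential sum along `u` is `O(1/δ)`. -/
theorem norm_sum_unitPhase_le_of_increments_away {u : ℕ → ℝ} {k : ℕ} {m : ℤ} {δ : ℝ} (hδ : 0 < δ)
    (hlo : ∀ n < k, m + δ ≤ u (n + 1) - u n) (hhi : ∀ n < k, u (n + 1) - u n ≤ m + 1 - δ)
    (hmono : ∀ n, n + 1 < k → u (n + 1) - u n ≤ u (n + 2) - u (n + 1)) :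
    ‖∑ n ∈ range k, unitPhase (u n)‖ ≤ 2 / δ := by
  rcases Nat.eq_zero_or_pos k with rfl | hk
  · simp; positivity
  set θ : ℕ → ℝ := fun n => u (n + 1) - u n - m with hθ
  set c : ℕ → ℂ := fun n => 1 / 2 + (halfCotPi (θ n) : ℂ) * Complex.I with hc
  have hl : ∀ n < k, δ ≤ θ n := fun n hn => by have := hlo n hn; simp only [hθ]; linarith
  have hh : ∀ n < k, θ n ≤ 1 - δ := fun n hn => by have := hhi n hn; simp only [hθ]; linarith
  have hz : ∀ n < k, c n * (unitPhase (u n) - unitPhase (u (n + 1))) = unitPhase (u n) := by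
    intro n hn
    have h1 : unitPhase (u (n + 1)) = unitPhase (u n) * unitPhase (θ n) := by
      rw [hθ, unitPhase_sub_intCast, ← unitPhase_add]
      congr 1
      ring
    have h2 := half_add_halfCotPi_mul (t := θ n) (by have := hl n hn; linarith)
      (by have := hh n hn; linarith)
    rw [h1]
    linear_combination unitPhase (u n) * h2
  have key : ∀ j < k, ‖∑ n ∈ range (j + 1), unitPhase (u n) + c j * unitPhase (u (j + 1))
      - c 0 * unitPhase (u 0)‖ ≤ halfCotPi (θ 0) - halfCotPi (θ j) := by
    intro j
    induction j with
    | zero =>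
      intro hj
      have h := hz 0 hj
      simp only [zero_add, range_one, sum_singleton, sub_self]
      rw [norm_le_zero_iff]
      linear_combination -h
    | succ j ih =>
      intro hj
      have h := hz (j + 1) hj
      have ih := ih (by omega)
      rw [sum_range_succ]
      have e : ∑ n ∈ range (j + 1), unitPhase (u n) + unitPhase (u (j + 1))
          + c (j + 1) * unitPhase (u (j + 1 + 1)) - c 0 * unitPhase (u 0)
          = (∑ n ∈ range (j + 1), unitPhase (u n) + c j * unitPhase (u (j + 1))
            - c 0 * unitPhase (u 0)) + (c (j + 1) - c j) * unitPhase (u (j + 1)) := by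
        linear_combination -h
      rw [e]
      refine (norm_add_le _ _).trans ?_
      rw [norm_mul, norm_unitPhase, mul_one]
      have hcc : c (j + 1) - c j
          = ((halfCotPi (θ (j + 1)) - halfCotPi (θ j) : ℝ) : ℂ) * Complex.I := by
        simp only [hc]; push_cast; ring
      have ha : halfCotPi (θ (j + 1)) ≤ halfCotPi (θ j) := by
        apply halfCotPi_anti
        · have := hl j (by omega); linarith
        · have := hmono j hj; simp only [hθ]; linarith
        · have := hh (j + 1) hj; linarith
      rw [hcc, norm_mul, Complex.norm_I, mul_one, Complex.norm_real, Real.norm_eq_abs,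
        abs_of_nonpos (by linarith)]
      linarith
  obtain ⟨j, rfl⟩ : ∃ j, k = j + 1 := ⟨k - 1, by omega⟩
  have hkey := key j (by omega)
  have hcn : ∀ n < j + 1, ‖c n‖ ≤ 1 / 2 + 1 / (4 * δ) := by
    intro n hn
    refine (norm_add_le _ _).trans ?_
    rw [norm_mul, Complex.norm_I, mul_one, Complex.norm_real, Real.norm_eq_abs]
    have := abs_halfCotPi_le hδ (hl n hn) (hh n hn)
    norm_num at this ⊢
    linarith
  have e : ∑ n ∈ range (j + 1), unitPhase (u n) =
      (∑ n ∈ range (j + 1), unitPhase (u n) + c j * unitPhase (u (j + 1))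
      - c 0 * unitPhase (u 0)) - c j * unitPhase (u (j + 1)) + c 0 * unitPhase (u 0) := by ring
  rw [e]
  refine (norm_add_le _ _).trans ?_
  have h3 := norm_sub_le (∑ n ∈ range (j + 1), unitPhase (u n) + c j * unitPhase (u (j + 1))
      - c 0 * unitPhase (u 0)) (c j * unitPhase (u (j + 1)))
  rw [norm_mul, norm_unitPhase, mul_one] at h3 ⊢
  have h4 := hcn 0 (by omega)
  have h5 := hcn j (by omega)
  have h6 := abs_le.mp (abs_halfCotPi_le hδ (hl 0 (by omega)) (hh 0 (by omega)))
  have h7 := abs_le.mp (abs_halfCotPi_le hδ (hl j (by omega)) (hh j (by omega)))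
  have hδ1 : δ ≤ 1 := by
    have h8 := hl 0 (by omega)
    have h9 := hh 0 (by omega)
    linarith
  have h10 : 1 / (4 * δ) = 1 / δ / 4 := by field_simp
  have h11 : 1 ≤ 1 / δ := by rw [le_div_iff₀ hδ]; linarith
  have h12 : 2 / δ = 2 * (1 / δ) := by ring
  rw [h10] at h4 h5 h6 h7
  linarith [h6.2, h7.1]

lemma mul_sub_le_of_increment_gap {θ : ℕ → ℝ} {μ : ℝ} {N : ℕ}
    (hgap : ∀ n < N, μ ≤ θ (n + 1) - θ n) {i j : ℕ} (hij : i ≤ j) (hj : j ≤ N) :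
    μ * ((j : ℝ) - i) ≤ θ j - θ i := by
  induction j, hij using Nat.le_induction with
  | base => simp
  | succ j hij ih =>
    have := ih (by omega)
    have := hgap j (by omega)
    push_cast
    linarith

lemma card_le_of_increment_gap {θ : ℕ → ℝ} {μ δ c : ℝ} {N : ℕ} (hμ : 0 < μ) (hδ : 0 ≤ δ)
    (hgap : ∀ n < N, μ ≤ θ (n + 1) - θ n) {s : Finset ℕ} (hs : s ⊆ range N)
    (hlo : ∀ n ∈ s, c ≤ θ n) (hhi : ∀ n ∈ s, θ n ≤ c + δ) :
    (#s : ℝ) ≤ δ / μ + 1 := by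
  rcases s.eq_empty_or_nonempty with rfl | hne
  · simp; positivity
  have hsub : s ⊆ Icc (s.min' hne) (s.max' hne) := fun n hn =>
    mem_Icc.mpr ⟨s.min'_le n hn, s.le_max' n hn⟩
  have hle : s.min' hne ≤ s.max' hne := s.min'_le _ (s.max'_mem hne)
  have h1 := mul_sub_le_of_increment_gap hgap hle (mem_range.mp (hs (s.max'_mem hne))).le
  have h2 := hlo _ (s.min'_mem hne)
  have h3 := hhi _ (s.max'_mem hne)
  have h4 := card_le_card hsub
  rw [Nat.card_Icc] at h4
  have h5 : (#s : ℝ) ≤ (s.max' hne : ℝ) + 1 - s.min' hne := by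
    rw [← Nat.cast_add_one, ← Nat.cast_sub (by omega)]
    exact_mod_cast h4
  have h6 : (s.max' hne : ℝ) - s.min' hne ≤ δ / μ := by
    rw [le_div_iff₀ hμ]
    linarith
  linarith

lemma norm_sum_unitPhase_le_card (u : ℕ → ℝ) (s : Finset ℕ) :
    ‖∑ n ∈ s, unitPhase (u n)‖ ≤ #s := by
  refine (norm_sum_le _ _).trans ?_
  simp [norm_unitPhase]

lemma norm_sum_unitPhase_filter_le {u : ℕ → ℝ} {N : ℕ} {μ δ : ℝ} {m : ℤ} (hμ : 0 < μ) (hδ : 0 < δ)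
    (hgap : ∀ n < N, μ ≤ (u (n + 2) - u (n + 1)) - (u (n + 1) - u n)) :
    ‖∑ n ∈ range N with m + δ ≤ u (n + 1) - u n ∧ u (n + 1) - u n ≤ m + 1 - δ,
      unitPhase (u n)‖ ≤ 2 / δ := by
  set s := {n ∈ range N | m + δ ≤ u (n + 1) - u n ∧ u (n + 1) - u n ≤ m + 1 - δ} with hs
  rcases s.eq_empty_or_nonempty with h | hne
  · rw [h]; simp; positivity
  have hmono : ∀ i j, i ≤ j → j ≤ N → u (i + 1) - u i ≤ u (j + 1) - u j := by
    intro i j hij hj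
    have h := mul_sub_le_of_increment_gap (θ := fun n => u (n + 1) - u n) hgap hij hj
    have : (i : ℝ) ≤ j := by exact_mod_cast hij
    nlinarith
  have hiff : ∀ n ∈ s, n < N ∧ m + δ ≤ u (n + 1) - u n ∧ u (n + 1) - u n ≤ m + 1 - δ := by
    intro n hn
    rwa [hs, mem_filter, mem_range] at hn
  have hmin := hiff _ (s.min'_mem hne)
  have hmax := hiff _ (s.max'_mem hne)
  set a := s.min' hne with ha
  set b := s.max' hne with hb
  have hset : s = Ico a (b + 1) := by
    ext n
    constructor
    · intro hn
      have h1 := s.min'_le n hn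
      have h2 := s.le_max' n hn
      exact mem_Ico.mpr ⟨h1, by omega⟩
    · intro hn
      rw [mem_Ico] at hn
      rw [hs, mem_filter, mem_range]
      have h1 := hmono a n hn.1 (by omega)
      have h2 := hmono n b (by omega) (by omega)
      exact ⟨by omega, by linarith [hmin.2.1], by linarith [hmax.2.2]⟩
  have hmem : ∀ n < b + 1 - a, a + n ∈ s := fun n hn => by
    rw [hset, mem_Ico]; omega
  rw [hset, sum_Ico_eq_sum_range]
  refine norm_sum_unitPhase_le_of_increments_away (u := fun n => u (a + n)) (m := m) hδ ?_ ?_ ?_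
  · exact fun n hn => (hiff _ (hmem n hn)).2.1
  · exact fun n hn => (hiff _ (hmem n hn)).2.2
  · intro n hn
    exact hmono (a + n) (a + (n + 1)) (by omega) (by omega)

/-- The second derivative test: if the second differences of `u` are at least `μ` and its first
differences vary by at most `R`, then the exponential sum along `u` is `O((R + 1) μ^{-1/2})`. -/
theorem norm_sum_unitPhase_le_of_second_difference {u : ℕ → ℝ} {N : ℕ} {μ R : ℝ} (hμ : 0 < μ)
    (hμ1 : μ ≤ 1) (hgap : ∀ n < N, μ ≤ (u (n + 2) - u (n + 1)) - (u (n + 1) - u n))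
    (hR : (u (N + 1) - u N) - (u 1 - u 0) ≤ R) :
    ‖∑ n ∈ range N, unitPhase (u n)‖ ≤ (R + 2) * (6 / √μ) := by
  set θ : ℕ → ℝ := fun n => u (n + 1) - u n with hθ
  have hmono : ∀ i j, i ≤ j → j ≤ N → θ i ≤ θ j := by
    intro i j hij hj
    have h := mul_sub_le_of_increment_gap (θ := θ) hgap hij hj
    have : (i : ℝ) ≤ j := by exact_mod_cast hij
    nlinarith
  set δ := √μ with hδ
  have hδ0 : 0 < δ := Real.sqrt_pos.mpr hμ
  have hδ1 : δ ≤ 1 := Real.sqrt_le_one.mpr hμ1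
  have hδμ : δ / μ = 1 / δ := by
    rw [div_eq_div_iff hμ.ne' hδ0.ne', ← sq, hδ, Real.sq_sqrt hμ.le, one_mul]
  have hinv : 1 ≤ 1 / δ := by rw [le_div_iff₀ hδ0]; linarith
  have hmaps : ∀ n ∈ range N, ⌊θ n⌋ ∈ Icc ⌊θ 0⌋ ⌊θ N⌋ := by
    intro n hn
    rw [mem_range] at hn
    exact mem_Icc.mpr ⟨Int.floor_mono (hmono 0 n (by omega) (by omega)),
      Int.floor_mono (hmono n N (by omega) (by omega))⟩
  have hcard : (#(Icc ⌊θ 0⌋ ⌊θ N⌋) : ℝ) ≤ R + 2 := by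
    have h0 : ⌊θ 0⌋ ≤ ⌊θ N⌋ := Int.floor_mono (hmono 0 N (by omega) le_rfl)
    have h1 := Int.floor_le (θ N)
    have h2 := Int.lt_floor_add_one (θ 0)
    have h3 : (#(Icc ⌊θ 0⌋ ⌊θ N⌋) : ℤ) = ⌊θ N⌋ + 1 - ⌊θ 0⌋ := by
      rw [Int.card_Icc, Int.toNat_of_nonneg (by omega)]
    have h4 : (#(Icc ⌊θ 0⌋ ⌊θ N⌋) : ℝ) = ⌊θ N⌋ + 1 - ⌊θ 0⌋ := by exact_mod_cast h3
    have h5 : θ N - θ 0 ≤ R := hR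
    linarith
  rw [← sum_fiberwise_of_maps_to hmaps]
  refine (norm_sum_le _ _).trans ?_
  have hfib : ∀ m ∈ Icc ⌊θ 0⌋ ⌊θ N⌋,
      ‖∑ n ∈ range N with ⌊θ n⌋ = m, unitPhase (u n)‖ ≤ 6 / δ := by
    intro m _
    set s := {n ∈ range N | ⌊θ n⌋ = m} with hs
    have hsθ : ∀ n ∈ s, n ∈ range N ∧ m ≤ θ n ∧ θ n < m + 1 := by
      intro n hn
      rw [hs, mem_filter] at hn
      exact ⟨hn.1, Int.floor_eq_iff.mp hn.2⟩
    rw [← sum_filter_add_sum_filter_not s (fun n => m + δ ≤ θ n ∧ θ n ≤ m + 1 - δ),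
      ← sum_filter_add_sum_filter_not
        {n ∈ s | ¬ (m + δ ≤ θ n ∧ θ n ≤ m + 1 - δ)} (fun n => θ n < m + δ)]
    have hmid : {n ∈ s | m + δ ≤ θ n ∧ θ n ≤ m + 1 - δ}
        = {n ∈ range N | m + δ ≤ θ n ∧ θ n ≤ m + 1 - δ} := by
      ext n
      simp only [hs, mem_filter]
      constructor
      · tauto
      · rintro ⟨h1, h2, h3⟩
        exact ⟨⟨h1, Int.floor_eq_iff.mpr ⟨by linarith, by linarith⟩⟩, h2, h3⟩
    have h1 : ‖∑ n ∈ s with m + δ ≤ θ n ∧ θ n ≤ m + 1 - δ, unitPhase (u n)‖ ≤ 2 / δ := by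
      rw [hmid]
      exact norm_sum_unitPhase_filter_le hμ hδ0 hgap
    have h2 := (norm_sum_unitPhase_le_card u
      {n ∈ {n ∈ s | ¬ (m + δ ≤ θ n ∧ θ n ≤ m + 1 - δ)} | θ n < m + δ}).trans
      (card_le_of_increment_gap (θ := θ) (c := m) hμ hδ0.le hgap
        (fun n hn => by simp only [mem_filter] at hn; exact (hsθ n hn.1.1).1)
        (fun n hn => by simp only [mem_filter] at hn; exact (hsθ n hn.1.1).2.1)
        (fun n hn => by simp only [mem_filter] at hn; exact hn.2.le))
    have h3 := (norm_sum_unitPhase_le_card u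
      {n ∈ {n ∈ s | ¬ (m + δ ≤ θ n ∧ θ n ≤ m + 1 - δ)} | ¬ θ n < m + δ}).trans
      (card_le_of_increment_gap (θ := θ) (c := m + 1 - δ) hμ hδ0.le hgap
        (fun n hn => by simp only [mem_filter] at hn; exact (hsθ n hn.1.1).1)
        (fun n hn => by
          simp only [mem_filter, not_and, not_le, not_lt] at hn
          exact (hn.1.2 hn.2).le)
        (fun n hn => by
          simp only [mem_filter] at hn
          linarith [(hsθ n hn.1.1).2.2]))
    rw [hδμ] at h2 h3
    refine (norm_add_le _ _).trans ?_
    have h4 := norm_add_le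
      (∑ n ∈ {n ∈ s | ¬ (m + δ ≤ θ n ∧ θ n ≤ m + 1 - δ)} with θ n < m + δ, unitPhase (u n))
      (∑ n ∈ {n ∈ s | ¬ (m + δ ≤ θ n ∧ θ n ≤ m + 1 - δ)} with ¬ θ n < m + δ, unitPhase (u n))
    have h5 : 2 / δ = 2 * (1 / δ) := by ring
    have h6 : 6 / δ = 6 * (1 / δ) := by ring
    linarith
  refine (sum_le_card_nsmul _ _ _ hfib).trans ?_
  rw [nsmul_eq_mul]
  exact mul_le_mul_of_nonneg_right hcard (by positivity)

/-- Exponential sums along a hyperbola, over a dyadic block. -/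
lemma norm_sum_unitPhase_hyperbola_le {y α β : ℝ} {M N h : ℕ} (hM : 1 ≤ M) (hMy : (M : ℝ) ^ 2 ≤ y)
    (hα0 : 0 ≤ α) (hα1 : α ≤ 1) (hN : N ≤ M) (hh : 1 ≤ h) :
    ‖∑ n ∈ range N, unitPhase (h * (y / ((M : ℝ) + 1 + n + α) + β))‖
      ≤ 144 * √(y / M) * √h := by
  have hM' : (1 : ℝ) ≤ M := by exact_mod_cast hM
  have hh' : (1 : ℝ) ≤ h := by exact_mod_cast hh
  have hN' : (N : ℝ) ≤ M := by exact_mod_cast hN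
  have hy : 0 < y := by nlinarith
  set μ : ℝ := h * y / (64 * M ^ 3) with hμ
  have hμ0 : 0 < μ := by positivity
  have hsq : √(y / M) * √h = 8 * M * √μ := by
    have e : y / M * h = (8 * M) ^ 2 * μ := by rw [hμ]; field_simp; ring
    rw [← Real.sqrt_mul (by positivity), e, Real.sqrt_mul (by positivity),
      Real.sqrt_sq (by positivity)]
  rw [mul_assoc, hsq]
  rcases le_or_gt μ 1 with hμ1 | hμ1
  · have key := norm_sum_unitPhase_le_of_second_difference (N := N)
      (u := fun n : ℕ => h * (y / ((M : ℝ) + 1 + n + α) + β)) (R := h * y / M ^ 2) hμ0 hμ1 ?_ ?_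
    · refine key.trans ?_
      have h1 : 1 ≤ h * y / (M : ℝ) ^ 2 := by
        rw [le_div_iff₀ (by positivity)]
        nlinarith
      have h2 : h * y / (M : ℝ) ^ 2 = 64 * M * (√μ * √μ) := by
        rw [Real.mul_self_sqrt hμ0.le, hμ]
        field_simp
      have hs : 0 < √μ := Real.sqrt_pos.mpr hμ0
      calc (h * y / (M : ℝ) ^ 2 + 2) * (6 / √μ)
          ≤ (3 * (h * y / (M : ℝ) ^ 2)) * (6 / √μ) := by
            apply mul_le_mul_of_nonneg_right (by linarith) (by positivity)
        _ = 144 * (8 * M * √μ) := by rw [h2]; field_simp; norm_num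
    · intro n hn
      have hn' : (n : ℝ) + 1 ≤ N := by exact_mod_cast hn
      set v : ℝ := (M : ℝ) + 1 + n + α with hv
      have hv0 : 0 < v := by positivity
      have e : (h * (y / ((M : ℝ) + 1 + (n + 2 : ℕ) + α) + β)
          - h * (y / ((M : ℝ) + 1 + (n + 1 : ℕ) + α) + β))
          - (h * (y / ((M : ℝ) + 1 + (n + 1 : ℕ) + α) + β)
          - h * (y / ((M : ℝ) + 1 + n + α) + β)) = 2 * h * y / (v * (v + 1) * (v + 2)) := by
        have e1 : (M : ℝ) + 1 + (n + 2 : ℕ) + α = v + 2 := by rw [hv]; push_cast; ring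
        have e2 : (M : ℝ) + 1 + (n + 1 : ℕ) + α = v + 1 := by rw [hv]; push_cast; ring
        rw [e1, e2, ← hv]
        field_simp
        ring
      refine le_of_le_of_eq ?_ e.symm
      rw [hμ, div_le_div_iff₀ (by positivity) (by positivity)]
      have hv1 : v + 2 ≤ 5 * M := by rw [hv]; linarith
      have hv2 : v * (v + 1) * (v + 2) ≤ (5 * M) * (5 * M) * (5 * M) := by
        gcongr <;> linarith
      have hv3 : v * (v + 1) * (v + 2) ≤ 128 * (M : ℝ) ^ 3 := by
        refine hv2.trans ?_
        have : (0 : ℝ) ≤ (M : ℝ) ^ 3 := by positivity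
        linarith
      calc h * y * (v * (v + 1) * (v + 2)) ≤ h * y * (128 * (M : ℝ) ^ 3) := by gcongr
        _ = 2 * h * y * (64 * M ^ 3) := by ring
    · have h1 : h * (y / ((M : ℝ) + 1 + (N + 1 : ℕ) + α) + β)
          ≤ h * (y / ((M : ℝ) + 1 + N + α) + β) := by
        have : (N : ℝ) ≤ (N + 1 : ℕ) := by push_cast; linarith
        gcongr
      have h2 : h * (y / ((M : ℝ) + 1 + (0 : ℕ) + α) + β)
          - h * (y / ((M : ℝ) + 1 + (1 : ℕ) + α) + β) ≤ h * y / (M : ℝ) ^ 2 := by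
        have e : h * (y / ((M : ℝ) + 1 + (0 : ℕ) + α) + β)
          - h * (y / ((M : ℝ) + 1 + (1 : ℕ) + α) + β)
          = h * y / (((M : ℝ) + 1 + α) * ((M : ℝ) + 2 + α)) := by
          push_cast
          have : (M : ℝ) + 1 + 0 + α ≠ 0 := by positivity
          have : (M : ℝ) + 1 + 1 + α ≠ 0 := by positivity
          have : (M : ℝ) + 1 + α ≠ 0 := by positivity
          have : (M : ℝ) + 2 + α ≠ 0 := by positivity
          field_simp
          ring
        rw [e]
        gcongr
        nlinarith
      linarith
  · refine (norm_sum_unitPhase_le_card _ _).trans ?_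
    rw [card_range]
    have : 1 ≤ √μ := Real.one_le_sqrt.mpr hμ1.le
    nlinarith

/-- The periodic second Bernoulli function. -/
noncomputable def periodicBernoulliTwo (t : ℝ) : ℝ := Int.fract t ^ 2 - Int.fract t + 1 / 6

lemma hasSum_cos_periodicBernoulliTwo (t : ℝ) :
    HasSum (fun n : ℕ => 1 / (n : ℝ) ^ 2 * Real.cos (2 * Real.pi * (n * t)))
      (Real.pi ^ 2 * periodicBernoulliTwo t) := by
  have h := hasSum_one_div_nat_pow_mul_cos one_ne_zero (x := Int.fract t)
    ⟨Int.fract_nonneg t, (Int.fract_lt_one t).le⟩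
  convert! h using 1
  · funext n
    congr 1
    have e : 2 * Real.pi * (n * t) =
        2 * Real.pi * n * Int.fract t + ((n * ⌊t⌋ : ℤ) : ℝ) * (2 * Real.pi) := by
      have := Int.fract_add_floor t
      push_cast
      linear_combination (-2 * Real.pi * n) * this
    rw [e, Real.cos_add_int_mul_two_pi]
  · have hB : Polynomial.eval (Int.fract t)
        (Polynomial.map (algebraMap ℚ ℝ) (Polynomial.bernoulli (2 * 1)))
        = Int.fract t ^ 2 - Int.fract t + 1 / 6 := by
      simp [Polynomial.bernoulli, sum_range_succ, Polynomial.eval_add, bernoulli_eq_bernoulli'_of_ne_one,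
        bernoulli'_two, Nat.choose]
      ring
    rw [hB, periodicBernoulliTwo, show Nat.factorial (2 * 1) = 2 from rfl]
    push_cast
    ring

lemma sub_le_fract_sub_half {t Δ : ℝ} (h0 : 0 < Δ) (h1 : Δ ≤ 1) :
    periodicBernoulliTwo (t + Δ) - periodicBernoulliTwo t
      ≤ 2 * Δ * (Int.fract t - 1 / 2) + Δ ^ 2 := by
  have ha0 := Int.fract_nonneg t
  have ha1 := Int.fract_lt_one t
  have ht := Int.fract_add_floor t
  unfold periodicBernoulliTwo
  rcases lt_or_ge (Int.fract t + Δ) 1 with h | h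
  · have e : Int.fract (t + Δ) = Int.fract t + Δ := by
      rw [Int.fract_eq_iff]
      exact ⟨by linarith, h, ⌊t⌋, by linarith⟩
    rw [e]
    nlinarith
  · have e : Int.fract (t + Δ) = Int.fract t + Δ - 1 := by
      rw [Int.fract_eq_iff]
      exact ⟨by linarith, by linarith, ⌊t⌋ + 1, by push_cast; linarith⟩
    rw [e]
    nlinarith

lemma fract_sub_half_le_sub {t Δ : ℝ} (h0 : 0 < Δ) (h1 : Δ ≤ 1) :
    2 * Δ * (Int.fract t - 1 / 2) - Δ ^ 2
      ≤ periodicBernoulliTwo t - periodicBernoulliTwo (t + -Δ) := by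
  have ha0 := Int.fract_nonneg t
  have ha1 := Int.fract_lt_one t
  have ht := Int.fract_add_floor t
  unfold periodicBernoulliTwo
  rcases lt_or_ge (Int.fract t - Δ) 0 with h | h
  · have e : Int.fract (t + -Δ) = Int.fract t - Δ + 1 := by
      rw [Int.fract_eq_iff]
      exact ⟨by linarith, by linarith, ⌊t⌋ - 1, by push_cast; linarith⟩
    rw [e]
    nlinarith
  · have e : Int.fract (t + -Δ) = Int.fract t - Δ := by
      rw [Int.fract_eq_iff]
      exact ⟨by linarith, by linarith, ⌊t⌋, by linarith⟩
    rw [e]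
    nlinarith

lemma sum_sqrt_div_sq_mul_min_le {H : ℕ} (hH : 1 ≤ H) (J : ℕ) :
    ∑ h ∈ range J, √(h : ℝ) / (h : ℝ) ^ 2 * min 1 ((h : ℝ) / H) ≤ 4 / √H := by
  have hH' : (1 : ℝ) ≤ H := by exact_mod_cast hH
  have hsH : 0 < √(H : ℝ) := Real.sqrt_pos.mpr (by linarith)
  have hnn : ∀ h : ℕ, 0 ≤ √(h : ℝ) / (h : ℝ) ^ 2 * min 1 ((h : ℝ) / H) := fun h => by positivity
  have hsmall : ∀ J : ℕ, ∑ h ∈ range (J + 1), √(h : ℝ) / (h : ℝ) ^ 2 * min 1 ((h : ℝ) / H)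
      ≤ 2 * √J / H := by
    intro J
    induction J with
    | zero => simp
    | succ J ih =>
      rw [sum_range_succ]
      refine (add_le_add_left ih _).trans ?_
      push_cast
      have hJ : (0 : ℝ) ≤ J := Nat.cast_nonneg J
      set a := √(J : ℝ) with ha
      set b := √((J : ℝ) + 1) with hb
      have hb0 : 0 < b := Real.sqrt_pos.mpr (by linarith)
      have hab : a ≤ b := Real.sqrt_le_sqrt (by linarith)
      have ha2 : a ^ 2 = J := Real.sq_sqrt hJ
      have hb2 : b ^ 2 = J + 1 := Real.sq_sqrt (by linarith)
      have h1 : b / ((J : ℝ) + 1) ^ 2 * min 1 (((J : ℝ) + 1) / H) ≤ 1 / (b * H) := by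
        calc _ ≤ b / ((J : ℝ) + 1) ^ 2 * (((J : ℝ) + 1) / H) := by gcongr; exact min_le_right _ _
          _ = 1 / (b * H) := by rw [← hb2]; field_simp
      have h2 : 1 / (b * H) ≤ 2 * b / H - 2 * a / H := by
        rw [← sub_div, ← div_div]
        gcongr
        rw [div_le_iff₀ hb0]
        nlinarith [Real.sqrt_nonneg (J : ℝ), sq_nonneg (b - a)]
      linarith
  have hlarge : ∀ J : ℕ, H ≤ J → ∑ h ∈ range (J + 1), √(h : ℝ) / (h : ℝ) ^ 2 * min 1 ((h : ℝ) / H)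
      ≤ 4 / √H - 2 / √J := by
    intro J hJ
    induction J, hJ using Nat.le_induction with
    | base =>
      refine (hsmall H).trans (le_of_eq ?_)
      have : (H : ℝ) = √H * √H := (Real.mul_self_sqrt (by linarith)).symm
      have e : 2 * √(H : ℝ) / H = 2 / √H := by
        rw [div_eq_div_iff (by linarith) hsH.ne']
        linarith
      rw [e]
      ring
    | succ J hJ ih =>
      rw [sum_range_succ]
      refine (add_le_add_left ih _).trans ?_
      push_cast
      have hJ : (1 : ℝ) ≤ J := by exact_mod_cast hH.trans hJ
      set a := √(J : ℝ) with ha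
      set b := √((J : ℝ) + 1) with hb
      have ha0 : 0 < a := Real.sqrt_pos.mpr (by linarith)
      have hb0 : 0 < b := Real.sqrt_pos.mpr (by linarith)
      have hab : a ≤ b := Real.sqrt_le_sqrt (by linarith)
      have ha2 : a ^ 2 = J := Real.sq_sqrt (by linarith)
      have hb2 : b ^ 2 = J + 1 := Real.sq_sqrt (by linarith)
      have h1 : b / ((J : ℝ) + 1) ^ 2 * min 1 (((J : ℝ) + 1) / H) ≤ 1 / b ^ 3 := by
        calc _ ≤ b / ((J : ℝ) + 1) ^ 2 * 1 := by gcongr; exact min_le_left _ _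
          _ = 1 / b ^ 3 := by rw [← hb2]; field_simp
      have h2 : 1 / b ^ 3 ≤ 2 / a - 2 / b := by
        rw [div_sub_div _ _ ha0.ne' hb0.ne', div_le_div_iff₀ (by positivity) (by positivity)]
        have h3 : 1 = (b - a) * (b + a) := by linarith [sq_sub_sq b a]
        have h4 : (b - a) * (b + a) * (a * b) ≤ (b - a) * (2 * b) * (b * b) := by
          have : 0 ≤ b - a := by linarith
          gcongr
          linarith
        calc 1 * (a * b) = (b - a) * (b + a) * (a * b) := by rw [← h3]
          _ ≤ _ := h4
          _ = _ := by ring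
      linarith
  have hJ : range J ⊆ range (max J H + 1) := range_subset_range.mpr (by omega)
  refine (sum_le_sum_of_subset_of_nonneg hJ fun h _ _ => hnn h).trans
    ((hlarge _ (le_max_right _ _)).trans ?_)
  have : 0 ≤ 2 / √((max J H : ℕ) : ℝ) := by positivity
  linarith

lemma abs_sum_periodicBernoulliTwo_sub_le {u : ℕ → ℝ} {N H : ℕ} {A s : ℝ} (hH : 1 ≤ H)
    (hA : 0 ≤ A) (hs : |s| = 1 / H)
    (hu : ∀ h : ℕ, 1 ≤ h → ‖∑ n ∈ range N, unitPhase (h * u n)‖ ≤ A * √h) :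
    |∑ n ∈ range N, (periodicBernoulliTwo (u n + s) - periodicBernoulliTwo (u n))|
      ≤ 4 * A / √H := by
  have hH' : (1 : ℝ) ≤ H := by exact_mod_cast hH
  have hsum := hasSum_sum (s := range N) fun n _ =>
    (hasSum_cos_periodicBernoulliTwo (u n + s)).sub (hasSum_cos_periodicBernoulliTwo (u n))
  have hterm : ∀ h : ℕ, |∑ n ∈ range N, (1 / (h : ℝ) ^ 2 * Real.cos (2 * Real.pi * (h * (u n + s)))
      - 1 / (h : ℝ) ^ 2 * Real.cos (2 * Real.pi * (h * u n)))|
      ≤ 7 * A * (√(h : ℝ) / (h : ℝ) ^ 2 * min 1 ((h : ℝ) / H)) := by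
    intro h
    rcases Nat.eq_zero_or_pos h with rfl | hh
    · simp
    have e : ∑ n ∈ range N, (1 / (h : ℝ) ^ 2 * Real.cos (2 * Real.pi * (h * (u n + s)))
        - 1 / (h : ℝ) ^ 2 * Real.cos (2 * Real.pi * (h * u n)))
        = 1 / (h : ℝ) ^ 2 *
          ((∑ n ∈ range N, unitPhase (h * u n)) * (unitPhase (h * s) - 1)).re := by
      rw [sum_mul, Complex.re_sum, mul_sum]
      refine sum_congr rfl fun n _ => ?_
      rw [mul_sub, ← unitPhase_add, mul_one, Complex.sub_re, unitPhase_re, unitPhase_re,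
        ← mul_add, mul_sub]
    have h1 : ‖unitPhase (h * s) - 1‖ ≤ 7 * min 1 ((h : ℝ) / H) := by
      rw [mul_min_of_nonneg _ _ (by norm_num)]
      refine le_min ?_ ?_
      · refine (norm_sub_le _ _).trans ?_
        rw [norm_unitPhase]
        norm_num
      · refine (norm_unitPhase_sub_one_le _).trans ?_
        rw [abs_mul, hs, Nat.abs_cast]
        have := Real.pi_lt_d2
        have h0 : (0 : ℝ) ≤ h / H := by positivity
        calc 2 * Real.pi * (h * (1 / H)) = 2 * Real.pi * (h / H) := by ring
          _ ≤ 7 * (h / H) := by gcongr; linarith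
    rw [e, abs_mul, abs_of_nonneg (show (0 : ℝ) ≤ 1 / (h : ℝ) ^ 2 by positivity)]
    calc 1 / (h : ℝ) ^ 2 * |((∑ n ∈ range N, unitPhase (h * u n)) * (unitPhase (h * s) - 1)).re|
        ≤ 1 / (h : ℝ) ^ 2 * ((A * √h) * (7 * min 1 ((h : ℝ) / H))) := by
          gcongr
          refine (Complex.abs_re_le_norm _).trans ?_
          rw [norm_mul]
          exact mul_le_mul (hu h hh) h1 (norm_nonneg _) (by positivity)
      _ = _ := by ring
  have hlim := hsum.tendsto_sum_nat.abs
  have hle := le_of_tendsto hlim (Eventually.of_forall fun J => (abs_sum_le_sum_abs _ _).trans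
    ((sum_le_sum fun h _ => hterm h).trans (by
      rw [← mul_sum]
      exact mul_le_mul_of_nonneg_left (sum_sqrt_div_sq_mul_min_le hH J) (by positivity))))
  have e : ∑ n ∈ range N, (Real.pi ^ 2 * periodicBernoulliTwo (u n + s)
      - Real.pi ^ 2 * periodicBernoulliTwo (u n))
      = Real.pi ^ 2 * ∑ n ∈ range N, (periodicBernoulliTwo (u n + s) - periodicBernoulliTwo (u n)) := by
    rw [mul_sum]
    exact sum_congr rfl fun n _ => by ring
  rw [e, abs_mul, abs_of_nonneg (sq_nonneg Real.pi)] at hle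
  have hpi : 9 ≤ Real.pi ^ 2 := by nlinarith [Real.pi_gt_three]
  have h9 : 9 * |∑ n ∈ range N, (periodicBernoulliTwo (u n + s) - periodicBernoulliTwo (u n))|
      ≤ 28 * (A / √H) := by
    refine (mul_le_mul_of_nonneg_right hpi (abs_nonneg _)).trans (hle.trans (le_of_eq ?_))
    ring
  have h10 : 0 ≤ A / √H := by positivity
  rw [mul_div_assoc]
  linarith

/-- Bound for a sum of the sawtooth function in terms of exponential sums growing like `√h`. -/
theorem abs_sum_fract_sub_half_le {u : ℕ → ℝ} {N H : ℕ} {A : ℝ} (hH : 1 ≤ H) (hA : 0 ≤ A)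
    (hu : ∀ h : ℕ, 1 ≤ h → ‖∑ n ∈ range N, unitPhase (h * u n)‖ ≤ A * √h) :
    |∑ n ∈ range N, (Int.fract (u n) - 1 / 2)| ≤ N / H + 2 * A * √H := by
  have hH' : (1 : ℝ) ≤ H := by exact_mod_cast hH
  have hHp : (0 : ℝ) < H := by linarith
  have hΔ0 : (0 : ℝ) < 1 / H := by positivity
  have hΔ1 : (1 : ℝ) / H ≤ 1 := by rw [div_le_one hHp]; exact hH'
  have hp := (abs_le.mp (abs_sum_periodicBernoulliTwo_sub_le hH hA (abs_of_pos hΔ0) hu)).1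
  have hm := (abs_le.mp (abs_sum_periodicBernoulliTwo_sub_le (s := -(1 / H)) hH hA
    (by rw [abs_neg, abs_of_pos hΔ0]) hu)).1
  have h1 := sum_le_sum fun n (_ : n ∈ range N) => sub_le_fract_sub_half (t := u n) hΔ0 hΔ1
  have h2 := sum_le_sum fun n (_ : n ∈ range N) => fract_sub_half_le_sub (t := u n) hΔ0 hΔ1
  rw [sum_add_distrib, ← mul_sum, sum_const, card_range, nsmul_eq_mul] at h1
  rw [sum_sub_distrib, ← mul_sum, sum_const, card_range, nsmul_eq_mul] at h2
  have h3 : ∑ n ∈ range N, (periodicBernoulliTwo (u n) - periodicBernoulliTwo (u n + -(1 / H)))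
      = -∑ n ∈ range N, (periodicBernoulliTwo (u n + -(1 / H)) - periodicBernoulliTwo (u n)) := by
    rw [← sum_neg_distrib]
    exact sum_congr rfl fun n _ => by ring
  rw [h3] at h2
  set S := ∑ n ∈ range N, (Int.fract (u n) - 1 / 2)
  have hs : 0 < √(H : ℝ) := Real.sqrt_pos.mpr hHp
  have e1 : 4 * A / √H = 2 * (1 / H) * (2 * A * √H) := by
    field_simp
    rw [Real.sq_sqrt hHp.le]
    ring
  have e2 : N * (1 / H : ℝ) ^ 2 = 2 * (1 / H) * (N / H / 2) := by field_simp
  have hN : (0 : ℝ) ≤ N / H := by positivity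
  have hc : (0 : ℝ) < 2 * (1 / H) := by positivity
  rw [abs_le]
  constructor
  · have : 2 * (1 / (H : ℝ)) * (-(N / H / 2 + 2 * A * √H)) ≤ 2 * (1 / H) * S := by linarith
    have := le_of_mul_le_mul_left this hc
    linarith
  · have : 2 * (1 / (H : ℝ)) * S ≤ 2 * (1 / H) * (N / H / 2 + 2 * A * √H) := by linarith
    have := le_of_mul_le_mul_left this hc
    linarith

lemma cube_rpow_third {y : ℝ} (hy : 0 ≤ y) : (y ^ ((1 : ℝ) / 3)) ^ 3 = y := by
  rw [← Real.rpow_natCast, ← Real.rpow_mul hy]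
  norm_num

lemma abs_sum_fract_sub_half_le_half_card (u : ℕ → ℝ) (N : ℕ) :
    |∑ n ∈ range N, (Int.fract (u n) - 1 / 2)| ≤ N / 2 := by
  refine (abs_sum_le_sum_abs _ _).trans ((sum_le_card_nsmul _ _ (1 / 2) fun n _ => ?_).trans ?_)
  · have h0 := Int.fract_nonneg (u n)
    have h1 := Int.fract_lt_one (u n)
    rw [abs_le]
    constructor <;> linarith
  · rw [card_range, nsmul_eq_mul]
    linarith

lemma abs_sum_fract_hyperbola_dyadic_le {y α β : ℝ} {M N : ℕ} (hM : 1 ≤ M)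
    (hMy : (M : ℝ) ^ 2 ≤ y) (hα0 : 0 ≤ α) (hα1 : α ≤ 1) (hN : N ≤ M) :
    |∑ n ∈ range N, (Int.fract (y / ((M : ℝ) + 1 + n + α) + β) - 1 / 2)|
      ≤ 600 * y ^ ((1 : ℝ) / 3) := by
  have hM' : (1 : ℝ) ≤ M := by exact_mod_cast hM
  have hN' : (N : ℝ) ≤ M := by exact_mod_cast hN
  have hy : 0 < y := by nlinarith
  set T := y ^ ((1 : ℝ) / 3) with hT
  have hT0 : 0 < T := Real.rpow_pos_of_pos hy _
  have hT3 : T ^ 3 = y := cube_rpow_third hy.le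
  rcases le_or_gt (M : ℝ) T with h | h
  · refine (abs_sum_fract_sub_half_le_half_card _ N).trans ?_
    linarith
  set H := ⌈M / T⌉₊ with hH
  have hMT : 1 < M / T := by rwa [one_lt_div hT0]
  have hHlo : M / T ≤ H := Nat.le_ceil _
  have hHhi : (H : ℝ) < M / T + 1 := Nat.ceil_lt_add_one (by positivity)
  have hH1 : 1 ≤ H := by
    have : (1 : ℝ) ≤ H := by linarith
    exact_mod_cast this
  have hH0 : (0 : ℝ) < H := by linarith
  have key := abs_sum_fract_sub_half_le (N := N)
    (u := fun n : ℕ => y / ((M : ℝ) + 1 + n + α) + β) hH1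
    (A := 144 * √(y / M)) (by positivity)
    (fun h hh => norm_sum_unitPhase_hyperbola_le hM hMy hα0 hα1 hN hh)
  refine key.trans ?_
  have h1 : (N : ℝ) / H ≤ T := by
    rw [div_le_iff₀ hH0]
    rw [div_le_iff₀ hT0] at hHlo
    linarith
  have h2 : √(y / M) * √H ≤ 2 * T := by
    rw [← Real.sqrt_mul (by positivity)]
    refine Real.sqrt_le_iff.mpr ⟨by positivity, ?_⟩
    calc y / M * H ≤ y / M * (2 * (M / T)) := by gcongr; linarith
      _ = 2 * T ^ 2 := by rw [← hT3]; field_simp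
      _ ≤ (2 * T) ^ 2 := by nlinarith
  linarith

/-- Sawtooth sums along a hyperbola of length at most the square root of its parameter. -/
theorem abs_sum_fract_hyperbola_le {y α β : ℝ} (hα0 : 0 ≤ α) (hα1 : α ≤ 1) (N : ℕ)
    (hN : (N : ℝ) ^ 2 ≤ y) :
    |∑ n ∈ range N, (Int.fract (y / ((n : ℝ) + 1 + α) + β) - 1 / 2)|
      ≤ 600 * y ^ ((1 : ℝ) / 3) * (1 + 4 * Real.log N) := by
  induction N using Nat.strong_induction_on with
  | _ N ih =>
    have hy : 0 ≤ y := (sq_nonneg _).trans hN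
    have hT : 0 ≤ y ^ ((1 : ℝ) / 3) := Real.rpow_nonneg hy _
    rcases Nat.lt_or_ge N 2 with h | h
    · interval_cases N
      · simp; positivity
      · refine (abs_sum_fract_sub_half_le_half_card _ 1).trans ?_
        have : 1 ≤ y ^ ((1 : ℝ) / 3) := Real.one_le_rpow (by simpa using hN) (by norm_num)
        norm_num
        linarith
    obtain ⟨M, hM⟩ : ∃ M, M = (N + 1) / 2 := ⟨_, rfl⟩
    have hMN : M < N := by omega
    have hMN' : (M : ℝ) ≤ N := by exact_mod_cast hMN.le
    have hM1 : (1 : ℝ) ≤ M := by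
      have : 1 ≤ M := by omega
      exact_mod_cast this
    have hMy : (M : ℝ) ^ 2 ≤ y := by nlinarith
    have h1 := ih M hMN hMy
    have h2 := abs_sum_fract_hyperbola_dyadic_le (β := β) (M := M) (N := N - M) (by omega) hMy
      hα0 hα1 (by omega)
    have e : ∑ n ∈ range N, (Int.fract (y / ((n : ℝ) + 1 + α) + β) - 1 / 2)
        = ∑ n ∈ range M, (Int.fract (y / ((n : ℝ) + 1 + α) + β) - 1 / 2)
        + ∑ n ∈ range (N - M), (Int.fract (y / ((M : ℝ) + 1 + n + α) + β) - 1 / 2) := by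
      conv_lhs => rw [show N = M + (N - M) by omega, sum_range_add]
      congr 1
      refine sum_congr rfl fun n _ => ?_
      push_cast
      rw [add_right_comm (M : ℝ) n 1]
    have hlog : 1 ≤ 4 * (Real.log N - Real.log M) := by
      have hNM : 4 * (M : ℝ) ≤ 3 * N := by
        have : 4 * M ≤ 3 * N := by omega
        exact_mod_cast this
      rw [← Real.log_div (by linarith) (by linarith)]
      have h3 := Real.one_sub_inv_le_log_of_pos (x := (N : ℝ) / M) (by positivity)
      rw [inv_div] at h3
      have h4 : (M : ℝ) / N ≤ 3 / 4 := by
        rw [div_le_div_iff₀ (by linarith) (by norm_num)]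
        linarith
      linarith
    rw [e]
    refine (abs_add_le _ _).trans ((add_le_add h1 h2).trans ?_)
    nlinarith

lemma abs_sum_fract_hyperbola_le_log {x y α β : ℝ} (hα0 : 0 ≤ α) (hα1 : α ≤ 1) {N : ℕ}
    (hN : (N : ℝ) ^ 2 ≤ y) (hyx : y ≤ x) (hx : 3 ≤ x) :
    |∑ n ∈ range N, (Int.fract (y / ((n : ℝ) + 1 + α) + β) - 1 / 2)|
      ≤ 3000 * (y ^ ((1 : ℝ) / 3) * Real.log x) := by
  have hy : 0 ≤ y := (sq_nonneg _).trans hN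
  refine (abs_sum_fract_hyperbola_le hα0 hα1 N hN).trans ?_
  have h1 : 1 ≤ Real.log x := by
    rw [Real.le_log_iff_exp_le (by linarith)]
    linarith [Real.exp_one_lt_d9]
  have h2 : Real.log N ≤ Real.log x := by
    rcases Nat.eq_zero_or_pos N with rfl | h
    · simp; linarith
    · have : (1 : ℝ) ≤ N := by exact_mod_cast h
      exact Real.log_le_log (by linarith) (by nlinarith)
  have hT : 0 ≤ y ^ ((1 : ℝ) / 3) := Real.rpow_nonneg hy _
  calc 600 * y ^ ((1 : ℝ) / 3) * (1 + 4 * Real.log N)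
      ≤ 600 * y ^ ((1 : ℝ) / 3) * (5 * Real.log x) := by gcongr; linarith
    _ = _ := by ring

lemma card_filter_Icc_one_eq_floor_sub_floor {a b : ℝ} {X : ℕ} (ha : 0 ≤ a) (hab : a ≤ b)
    (hb : b < X + 1) :
    (#{k ∈ Icc 1 X | a < (k : ℕ) ∧ ((k : ℕ) : ℝ) ≤ b} : ℝ) = ⌊b⌋₊ - ⌊a⌋₊ := by
  have e : {k ∈ Icc 1 X | a < (k : ℕ) ∧ ((k : ℕ) : ℝ) ≤ b} = Ioc ⌊a⌋₊ ⌊b⌋₊ := by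
    ext k
    simp only [mem_filter, mem_Icc, mem_Ioc, Nat.floor_lt ha, Nat.le_floor_iff (ha.trans hab)]
    constructor
    · tauto
    · rintro ⟨h1, h2⟩
      refine ⟨⟨?_, ?_⟩, h1, h2⟩
      · have : (0 : ℝ) < k := by linarith
        exact_mod_cast this
      · have : (k : ℝ) < X + 1 := by linarith
        exact Nat.lt_succ_iff.mp (by exact_mod_cast this)
  rw [e, Nat.card_Ioc, Nat.cast_sub (Nat.floor_mono hab)]

lemma floor_div_eq_mul_iff {x : ℝ} {p n k : ℕ} (hx : 0 ≤ x) (hp : 0 < p) (hn : 0 < n) :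
    ⌊x / n⌋₊ = p * k ↔ (n : ℝ) * k ≤ x / p ∧ x / p < n * (k + 1 / p) := by
  have hp' : (0 : ℝ) < p := by exact_mod_cast hp
  have hn' : (0 : ℝ) < n := by exact_mod_cast hn
  rw [Nat.floor_eq_iff (by positivity), le_div_iff₀ hn', div_lt_iff₀ hn', le_div_iff₀ hp',
    div_lt_iff₀ hp']
  push_cast
  have e : (n : ℝ) * (k + 1 / p) * p = (p * k + 1) * n := by field_simp
  rw [e, show (n : ℝ) * k * p = p * k * n by ring]

/-- The hyperbola method for the number of `n ≤ x` such that `p` divides `⌊x / n⌋`. -/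
theorem card_dvd_floor_div_eq {x : ℝ} {p K : ℕ} (hx : 0 ≤ x) (hp : 2 ≤ p) (hK : K ≤ ⌊x⌋₊) :
    (#{n ∈ Icc 1 ⌊x⌋₊ | p ∣ ⌊x / (n : ℕ)⌋₊} : ℝ) =
      ∑ n ∈ range ⌊x / p / (K + 1)⌋₊,
        ((⌊x / p / ((n : ℝ) + 1)⌋₊ : ℝ) - ⌊x / p / ((n : ℝ) + 1) - 1 / p⌋₊) +
      ∑ k ∈ range K, ((⌊x / p / ((k : ℝ) + 1)⌋₊ : ℝ) - ⌊x / p / ((k : ℝ) + 1 + 1 / p)⌋₊) := by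
  set X := ⌊x⌋₊ with hX
  set N := ⌊x / p / (K + 1)⌋₊ with hN
  set y := x / p with hy
  have hp' : (2 : ℝ) ≤ p := by exact_mod_cast hp
  have hp0 : (0 : ℝ) < p := by linarith
  have hy0 : 0 ≤ y := by positivity
  have hyx : y ≤ x := div_le_self hx (by linarith)
  have hxX : x < X + 1 := Nat.lt_floor_add_one x
  have hXx : (X : ℝ) ≤ x := Nat.floor_le hx
  have hNX : N ≤ X := Nat.floor_mono ((div_le_self hy0 (by
    have : (0 : ℝ) ≤ K := Nat.cast_nonneg K
    linarith)).trans hyx)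
  have hα0 : (0 : ℝ) < 1 / p := by positivity
  have hα1 : (1 : ℝ) / p ≤ 1 := by rw [div_le_one hp0]; linarith
  set I : ℕ → ℕ → ℝ := fun n k => if ⌊x / n⌋₊ = p * k then 1 else 0 with hI
  have hrow : ∀ n ∈ Icc 1 X, (if p ∣ ⌊x / n⌋₊ then (1 : ℝ) else 0) = ∑ k ∈ Icc 1 X, I n k := by
    intro n hn
    rw [mem_Icc] at hn
    have hn' : (1 : ℝ) ≤ n := by exact_mod_cast hn.1
    have hnX : (n : ℝ) ≤ X := by exact_mod_cast hn.2
    split_ifs with h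
    · obtain ⟨k, hk⟩ := h
      have hm1 : 1 ≤ ⌊x / n⌋₊ := by
        rw [Nat.one_le_floor_iff, le_div_iff₀ (by linarith)]
        linarith
      have hm2 : ⌊x / n⌋₊ ≤ X := Nat.floor_mono (div_le_self hx hn')
      rw [sum_eq_single k]
      · simp [hI, hk]
      · intro j _ hj
        simp only [hI, hk, ite_eq_right_iff, one_ne_zero, imp_false]
        intro h
        exact hj (Nat.eq_of_mul_eq_mul_left (by omega) h).symm
      · intro hk'
        exfalso
        apply hk'
        rw [mem_Icc]
        constructor
        · rcases Nat.eq_zero_or_pos k with rfl | h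
          · omega
          · exact h
        · nlinarith
    · rw [sum_eq_zero]
      intro k _
      simp only [hI, ite_eq_right_iff, one_ne_zero, imp_false]
      intro h'
      exact h ⟨k, h'⟩
  have hsplit : ∀ n ∈ Icc 1 X, ∀ k ∈ Icc 1 X,
      I n k = (if n ≤ N then I n k else 0) + (if k ≤ K then I n k else 0) := by
    intro n hn k hk
    rw [mem_Icc] at hn hk
    have hn' : (1 : ℝ) ≤ n := by exact_mod_cast hn.1
    by_cases h : ⌊x / n⌋₊ = p * k
    · have h' := (floor_div_eq_mul_iff hx (by omega) (by omega)).mp h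
      have hiff : n ≤ N ↔ ¬ k ≤ K := by
        rw [hN, Nat.le_floor_iff (by positivity), le_div_iff₀ (by positivity), not_le]
        constructor
        · intro h1
          have h2 : (n : ℝ) * (K + 1) < n * (k + 1 / p) := h1.trans_lt h'.2
          have h3 := lt_of_mul_lt_mul_left h2 (by linarith)
          have h4 : (K : ℝ) < k := by linarith
          exact_mod_cast h4
        · intro h1
          have h2 : (K : ℝ) + 1 ≤ k := by exact_mod_cast h1
          refine le_trans ?_ h'.1
          gcongr
      by_cases hk : k ≤ K
      · simp [hiff, hk]
      · simp [hiff, hk]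
    · simp [hI, h]
  have hcol_n : ∀ n ∈ Icc 1 X, ∑ k ∈ Icc 1 X, I n k
      = (⌊y / n⌋₊ : ℝ) - ⌊y / n - 1 / p⌋₊ := by
    intro n hn
    rw [mem_Icc] at hn
    have hn' : (1 : ℝ) ≤ n := by exact_mod_cast hn.1
    have hnX : (n : ℝ) ≤ X := by exact_mod_cast hn.2
    have hn0 : (0 : ℝ) < n := by linarith
    have h1 : 0 ≤ y / n - 1 / p := by
      rw [sub_nonneg, hy, div_div, div_le_div_iff₀ hp0 (by positivity)]
      nlinarith
    rw [← card_filter_Icc_one_eq_floor_sub_floor (X := X) h1 (by linarith)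
      (by have := div_le_self hy0 hn'; linarith), hI, sum_boole]
    congr 2
    refine filter_congr fun k _ => ?_
    rw [floor_div_eq_mul_iff hx (by omega) (by omega), and_comm, ← hy, le_div_iff₀ hn0,
      sub_lt_iff_lt_add, div_lt_iff₀ hn0, mul_comm (n : ℝ) (k + 1 / p), mul_comm (n : ℝ) k]
  have hcol_k : ∀ k ∈ Icc 1 X, ∑ n ∈ Icc 1 X, I n k
      = (⌊y / k⌋₊ : ℝ) - ⌊y / (k + 1 / p)⌋₊ := by
    intro k hk
    rw [mem_Icc] at hk
    have hk' : (1 : ℝ) ≤ k := by exact_mod_cast hk.1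
    have hk0 : (0 : ℝ) < k := by linarith
    rw [← card_filter_Icc_one_eq_floor_sub_floor (X := X) (by positivity)
      (by gcongr; linarith) (by have := div_le_self hy0 hk'; linarith), hI, sum_boole]
    congr 2
    refine filter_congr fun n hn => ?_
    rw [mem_Icc] at hn
    rw [floor_div_eq_mul_iff hx (by omega) (by omega), and_comm, ← hy, le_div_iff₀ hk0,
      div_lt_iff₀ (show (0 : ℝ) < k + 1 / p by positivity)]
  have hrange : ∀ (M : ℕ) (g : ℕ → ℝ), M ≤ X →
      ∑ n ∈ Icc 1 X, (if n ≤ M then g n else 0) = ∑ n ∈ range M, g (n + 1) := by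
    intro M g hM
    rw [← sum_filter, range_eq_Ico, sum_Ico_add' g 0 M 1]
    refine sum_congr ?_ fun _ _ => rfl
    ext n
    simp only [mem_filter, mem_Icc, mem_Ico]
    omega
  have hcount : (#{n ∈ Icc 1 X | p ∣ ⌊x / (n : ℕ)⌋₊} : ℝ)
      = ∑ n ∈ Icc 1 X, (if n ≤ N then ∑ k ∈ Icc 1 X, I n k else 0)
        + ∑ k ∈ Icc 1 X, (if k ≤ K then ∑ n ∈ Icc 1 X, I n k else 0) := by
    rw [← sum_boole, sum_congr rfl hrow,
      sum_congr rfl fun n hn => sum_congr rfl fun k hk => hsplit n hn k hk]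
    simp_rw [sum_add_distrib]
    congr 1
    · refine sum_congr rfl fun n _ => ?_
      split_ifs <;> simp
    · rw [sum_comm]
      refine sum_congr rfl fun n _ => ?_
      split_ifs <;> simp
  rw [hcount, hrange N _ hNX, hrange K _ hK]
  congr 1
  · refine sum_congr rfl fun n hn => ?_
    rw [mem_range] at hn
    rw [hcol_n (n + 1) (mem_Icc.mpr (by omega))]
    push_cast
    rfl
  · refine sum_congr rfl fun k hk => ?_
    rw [mem_range] at hk
    rw [hcol_k (k + 1) (mem_Icc.mpr (by omega))]
    push_cast
    rfl

/-- The constant `∑_{k ≥ 1} (1/k - 1/(k + α))`. -/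
noncomputable def harmonicGap (α : ℝ) : ℝ := ∑' k : ℕ, (1 / ((k : ℝ) + 1) - 1 / ((k : ℝ) + 1 + α))

lemma one_div_sub_one_div_add {α : ℝ} (hα : 0 ≤ α) (k : ℕ) :
    1 / ((k : ℝ) + 1) - 1 / ((k : ℝ) + 1 + α) = α / (((k : ℝ) + 1) * ((k : ℝ) + 1 + α)) := by
  field_simp
  ring

lemma summable_one_div_sub_one_div_add {α : ℝ} (hα : 0 ≤ α) :
    Summable fun k : ℕ => 1 / ((k : ℝ) + 1) - 1 / ((k : ℝ) + 1 + α) := by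
  have h : Summable fun k : ℕ => α * (1 / ((k + 1 : ℕ) : ℝ) ^ 2) :=
    ((summable_nat_add_iff 1).mpr (Real.summable_one_div_nat_pow.mpr one_lt_two)).mul_left α
  refine Summable.of_nonneg_of_le (fun k => ?_) (fun k => ?_) h
  · rw [one_div_sub_one_div_add hα]
    positivity
  · rw [one_div_sub_one_div_add hα, mul_one_div]
    push_cast
    gcongr
    nlinarith

lemma le_harmonicGap_sub_sum {α : ℝ} (hα0 : 0 ≤ α) (hα1 : α ≤ 1) (K : ℕ) :
    α / (K + 1) ≤ harmonicGap α
      - ∑ k ∈ range K, (1 / ((k : ℝ) + 1) - 1 / ((k : ℝ) + 1 + α)) := by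
  have hlim := ((summable_one_div_sub_one_div_add hα0).hasSum.tendsto_sum_nat.sub_const
    (∑ k ∈ range K, (1 / ((k : ℝ) + 1) - 1 / ((k : ℝ) + 1 + α)))).add
    (tendsto_one_div_add_atTop_nhds_zero_nat.const_mul α)
  rw [mul_zero, add_zero] at hlim
  refine ge_of_tendsto hlim (eventually_atTop.mpr ⟨K, fun J hJ => ?_⟩)
  induction J, hJ using Nat.le_induction with
  | base => simp [div_eq_mul_inv]
  | succ J hJ ih =>
    rw [sum_range_succ, one_div_sub_one_div_add hα0]
    have h1 : α * (1 / ((J : ℝ) + 1)) - α * (1 / ((J + 1 : ℕ) + 1 : ℝ))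
        ≤ α / (((J : ℝ) + 1) * ((J : ℝ) + 1 + α)) := by
      have e : α * (1 / ((J : ℝ) + 1)) - α * (1 / ((J + 1 : ℕ) + 1 : ℝ))
          = α / (((J : ℝ) + 1) * ((J : ℝ) + 1 + 1)) := by
        push_cast
        field_simp
        ring
      rw [e]
      gcongr
    linarith

lemma harmonicGap_sub_sum_le {α : ℝ} (hα0 : 0 ≤ α) {K : ℕ} (hK : 1 ≤ K) :
    harmonicGap α - ∑ k ∈ range K, (1 / ((k : ℝ) + 1) - 1 / ((k : ℝ) + 1 + α)) ≤ α / K := by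
  have hlim := (summable_one_div_sub_one_div_add hα0).hasSum.tendsto_sum_nat.sub_const
    (∑ k ∈ range K, (1 / ((k : ℝ) + 1) - 1 / ((k : ℝ) + 1 + α)))
  have hstep : ∀ J, K ≤ J → ∑ k ∈ range J, (1 / ((k : ℝ) + 1) - 1 / ((k : ℝ) + 1 + α))
      - ∑ k ∈ range K, (1 / ((k : ℝ) + 1) - 1 / ((k : ℝ) + 1 + α)) ≤ α / K - α / J := by
    intro J hJ
    induction J, hJ using Nat.le_induction with
    | base => simp
    | succ J hJ ih =>
      have hJ0 : (1 : ℝ) ≤ J := by exact_mod_cast hK.trans hJ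
      rw [sum_range_succ, one_div_sub_one_div_add hα0]
      have h1 : α / (((J : ℝ) + 1) * ((J : ℝ) + 1 + α)) ≤ α / J - α / (J + 1 : ℕ) := by
        have e : α / J - α / (J + 1 : ℕ) = α / (((J : ℝ) + 1) * J) := by
          push_cast
          field_simp
          ring
        rw [e]
        gcongr
        linarith
      linarith
  refine le_of_tendsto hlim (eventually_atTop.mpr ⟨K, fun J hJ => (hstep J hJ).trans ?_⟩)
  have : 0 ≤ α / J := by positivity
  linarith

lemma harmonicGap_nonneg {α : ℝ} (hα0 : 0 ≤ α) (hα1 : α ≤ 1) : 0 ≤ harmonicGap α := by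
  have h := le_harmonicGap_sub_sum hα0 hα1 0
  simp at h
  linarith

lemma harmonicGap_le {α : ℝ} (hα0 : 0 ≤ α) : harmonicGap α ≤ 2 * α := by
  have h := harmonicGap_sub_sum_le hα0 le_rfl
  rw [sum_range_one, one_div_sub_one_div_add hα0] at h
  have h1 : α / ((((0 : ℕ) : ℝ) + 1) * (((0 : ℕ) : ℝ) + 1 + α)) ≤ α :=
    div_le_self hα0 (by push_cast; linarith)
  norm_num at h h1 ⊢
  linarith

lemma natCast_floor_eq_sub_fract {t : ℝ} (ht : 0 ≤ t) : (⌊t⌋₊ : ℝ) = t - Int.fract t := by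
  rw [natCast_floor_eq_intCast_floor ht, Int.self_sub_fract]

/-- The remainder left after replacing floors by their arguments in the hyperbola method. -/
lemma abs_main_term_sub_le {y α : ℝ} (hy : 0 < y) (hα0 : 0 ≤ α) (hα1 : α ≤ 1) :
    |⌊y / ((⌊√y⌋₊ : ℝ) + 1)⌋₊ * α
      + y * ∑ k ∈ range ⌊√y⌋₊, (1 / ((k : ℝ) + 1) - 1 / ((k : ℝ) + 1 + α))
      - y * harmonicGap α| ≤ 3 * y ^ ((1 : ℝ) / 3) := by
  have hsq : √y * √y = y := Real.mul_self_sqrt hy.le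
  rcases lt_or_ge y 1 with h1 | h1
  · have hs : √y < 1 := by rw [Real.sqrt_lt' one_pos]; simpa using h1
    rw [Nat.floor_eq_zero.mpr hs]
    have hf : ⌊y / (((0 : ℕ) : ℝ) + 1)⌋₊ = 0 := by
      rw [Nat.floor_eq_zero]
      simpa using h1
    rw [hf]
    have h2 := harmonicGap_nonneg hα0 hα1
    have h3 := harmonicGap_le hα0
    have h4 : y ≤ y ^ ((1 : ℝ) / 3) := by
      conv_lhs => rw [← Real.rpow_one y]
      exact Real.rpow_le_rpow_of_exponent_ge hy h1.le (by norm_num)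
    simp only [range_zero, sum_empty, Nat.cast_zero, zero_mul, mul_zero, add_zero, zero_sub,
      abs_neg]
    rw [abs_of_nonneg (by positivity)]
    nlinarith
  · have hs : 1 ≤ √y := Real.one_le_sqrt.mpr h1
    have hT : 1 ≤ y ^ ((1 : ℝ) / 3) := Real.one_le_rpow h1 (by norm_num)
    set K := ⌊√y⌋₊ with hK
    have hK1 : 1 ≤ K := Nat.one_le_floor_iff _ |>.mpr hs
    have hK1' : (1 : ℝ) ≤ K := by exact_mod_cast hK1
    have hlt : √y < K + 1 := Nat.lt_floor_add_one _
    have hyK : y ≤ (K + 1) * (K + 1) := by nlinarith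
    have h2 := le_harmonicGap_sub_sum hα0 hα1 K
    have h3 := harmonicGap_sub_sum_le hα0 hK1
    set r := harmonicGap α - ∑ k ∈ range K, (1 / ((k : ℝ) + 1) - 1 / ((k : ℝ) + 1 + α)) with hr
    have h4 : (⌊y / ((K : ℝ) + 1)⌋₊ : ℝ) ≤ y / (K + 1) := Nat.floor_le (by positivity)
    have h5 : y / ((K : ℝ) + 1) < ⌊y / ((K : ℝ) + 1)⌋₊ + 1 := Nat.lt_floor_add_one _
    have h6 : y * (α / (K + 1)) ≤ y * r := by gcongr
    have h7 : y * r ≤ y * (α / K) := by gcongr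
    have h8 : y * (α / K) ≤ y / (K + 1) * α + 2 := by
      have e : y * (α / K) - y / (K + 1) * α = y * α / (K * (K + 1)) := by
        field_simp
        ring
      have h9 : y * α / (K * (K + 1)) ≤ 2 := by
        rw [div_le_iff₀ (by positivity)]
        nlinarith
      linarith
    have e : y * (α / (K + 1)) = y / (K + 1) * α := by ring
    have h10 : (⌊y / ((K : ℝ) + 1)⌋₊ : ℝ) * α ≤ y / (K + 1) * α := by gcongr
    have h11 : y / (K + 1) * α ≤ (⌊y / ((K : ℝ) + 1)⌋₊ : ℝ) * α + 1 := by nlinarith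
    have e2 : (⌊y / ((K : ℝ) + 1)⌋₊ : ℝ) * α
        + y * ∑ k ∈ range K, (1 / ((k : ℝ) + 1) - 1 / ((k : ℝ) + 1 + α)) - y * harmonicGap α
        = (⌊y / ((K : ℝ) + 1)⌋₊ : ℝ) * α - y * r := by
      rw [hr]
      ring
    rw [e2, abs_le]
    constructor <;> linarith

/-- The number of `n ≤ x` such that `p` divides `⌊x / n⌋`, with its error term. -/
theorem abs_card_dvd_floor_div_sub_le {x : ℝ} {p : ℕ} (hx : 3 ≤ x) (hp : 2 ≤ p) :
    |(#{n ∈ Icc 1 ⌊x⌋₊ | p ∣ ⌊x / (n : ℕ)⌋₊} : ℝ) - x / p * harmonicGap (1 / p)|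
      ≤ 12003 * ((x / p) ^ ((1 : ℝ) / 3) * Real.log x) := by
  have hp' : (2 : ℝ) ≤ p := by exact_mod_cast hp
  have hp0 : (0 : ℝ) < p := by linarith
  have hyx : x / p ≤ x := div_le_self (by linarith) (by linarith)
  have hy : 0 < x / p := by positivity
  have hα0 : (0 : ℝ) ≤ 1 / p := by positivity
  have hα1 : (1 : ℝ) / p ≤ 1 := by rw [div_le_one hp0]; linarith
  have hKX : ⌊√(x / p)⌋₊ ≤ ⌊x⌋₊ := by
    apply Nat.floor_mono
    rw [Real.sqrt_le_iff]
    constructor <;> nlinarith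
  rw [card_dvd_floor_div_eq (by linarith) hp hKX]
  have hmain := abs_main_term_sub_le hy hα0 hα1
  set y := x / p
  set α : ℝ := 1 / p
  set K := ⌊√y⌋₊ with hK
  set N := ⌊y / ((K : ℝ) + 1)⌋₊ with hN
  have hsq : √y * √y = y := Real.mul_self_sqrt hy.le
  have hKy : (K : ℝ) ^ 2 ≤ y := by
    have : (K : ℝ) ≤ √y := Nat.floor_le (Real.sqrt_nonneg y)
    nlinarith [Nat.cast_nonneg (α := ℝ) K]
  have hNle : (N : ℝ) ≤ y / (K + 1) := Nat.floor_le (by positivity)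
  have hNy : (N : ℝ) ^ 2 ≤ y := by
    have h1 : √y < K + 1 := Nat.lt_floor_add_one _
    have h2 : y / (K + 1) ≤ √y := by
      rw [div_le_iff₀ (by positivity)]
      nlinarith [Real.sqrt_nonneg y]
    nlinarith [Nat.cast_nonneg (α := ℝ) N]
  have h1 := abs_sum_fract_hyperbola_le_log (β := 0) le_rfl zero_le_one hNy hyx hx
  have h2 := abs_sum_fract_hyperbola_le_log (β := -α) le_rfl zero_le_one hNy hyx hx
  have h3 := abs_sum_fract_hyperbola_le_log (β := 0) le_rfl zero_le_one hKy hyx hx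
  have h4 := abs_sum_fract_hyperbola_le_log (β := 0) hα0 hα1 hKy hyx hx
  simp only [add_zero, ← sub_eq_add_neg] at h1 h2 h3 h4
  have e1 : ∑ n ∈ range N, ((⌊y / ((n : ℝ) + 1)⌋₊ : ℝ) - ⌊y / ((n : ℝ) + 1) - α⌋₊)
      = N * α - ∑ n ∈ range N, (Int.fract (y / ((n : ℝ) + 1)) - 1 / 2)
        + ∑ n ∈ range N, (Int.fract (y / ((n : ℝ) + 1) - α) - 1 / 2) := by
    have e : (N : ℝ) * α = ∑ n ∈ range N, α := by simp
    rw [e, ← sum_sub_distrib, ← sum_add_distrib]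
    refine sum_congr rfl fun n hn => ?_
    have hn' : (n : ℝ) + 1 ≤ N := by exact_mod_cast mem_range.mp hn
    have h5 : 1 ≤ y / ((n : ℝ) + 1) := by
      rw [le_div_iff₀ (by positivity)]
      have h6 : y / ((K : ℝ) + 1) ≤ y := div_le_self hy.le (by
        have := Nat.cast_nonneg (α := ℝ) K
        linarith)
      linarith
    rw [natCast_floor_eq_sub_fract (by positivity), natCast_floor_eq_sub_fract (by linarith)]
    ring
  have e2 : ∑ k ∈ range K, ((⌊y / ((k : ℝ) + 1)⌋₊ : ℝ) - ⌊y / ((k : ℝ) + 1 + α)⌋₊)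
      = y * ∑ k ∈ range K, (1 / ((k : ℝ) + 1) - 1 / ((k : ℝ) + 1 + α))
        - ∑ n ∈ range K, (Int.fract (y / ((n : ℝ) + 1)) - 1 / 2)
        + ∑ n ∈ range K, (Int.fract (y / ((n : ℝ) + 1 + α)) - 1 / 2) := by
    rw [mul_sum, ← sum_sub_distrib, ← sum_add_distrib]
    refine sum_congr rfl fun k _ => ?_
    rw [natCast_floor_eq_sub_fract (by positivity), natCast_floor_eq_sub_fract (by positivity)]
    ring
  rw [e1, e2]
  have hlog : 1 ≤ Real.log x := by
    rw [Real.le_log_iff_exp_le (by linarith)]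
    linarith [Real.exp_one_lt_d9]
  have hT : 0 ≤ y ^ ((1 : ℝ) / 3) := Real.rpow_nonneg hy.le _
  have h5 : y ^ ((1 : ℝ) / 3) ≤ y ^ ((1 : ℝ) / 3) * Real.log x := le_mul_of_one_le_right hT hlog
  rw [abs_le] at *
  constructor <;> linarith

lemma idConvPrimeIndicator_div (m : ℕ) :
    idConvPrimeIndicator m / m = ∑ p ∈ m.divisors.filter Nat.Prime, 1 / (p : ℝ) := by
  rcases Nat.eq_zero_or_pos m with rfl | hm
  · simp [idConvPrimeIndicator]
  rw [idConvPrimeIndicator, sum_div]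
  refine sum_congr rfl fun p hp => ?_
  rw [mem_filter, Nat.mem_divisors] at hp
  have hp0 : (p : ℝ) ≠ 0 := by exact_mod_cast hp.2.ne_zero
  have hm0 : (m : ℝ) ≠ 0 := by exact_mod_cast hm.ne'
  rw [Nat.cast_div hp.1.1 hp0]
  field_simp

/-- The summand of the double series over `p` prime and `m ≥ 1` divisible by `p`. -/
noncomputable def primeMultipleTerm (p m : ℕ) : ℝ :=
  if p.Prime ∧ p ∣ m ∧ m ≠ 0 then 1 / ((p : ℝ) * (m * (m + 1))) else 0

lemma hasSum_primeMultipleTerm (p : ℕ) :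
    HasSum (primeMultipleTerm p) (if p.Prime then harmonicGap (1 / p) / (p : ℝ) ^ 2 else 0) := by
  by_cases hp : p.Prime
  · rw [if_pos hp]
    have hp0 : (0 : ℝ) < p := by exact_mod_cast hp.pos
    have hinj : Function.Injective fun k : ℕ => p * (k + 1) := fun a b h => by
      have := Nat.eq_of_mul_eq_mul_left hp.pos h
      omega
    rw [← hinj.hasSum_iff]
    · have h := (summable_one_div_sub_one_div_add
        (show (0 : ℝ) ≤ 1 / p by positivity)).hasSum.div_const ((p : ℝ) ^ 2)
      convert! h using 1
      funext k
      have hk : p.Prime ∧ p ∣ p * (k + 1) ∧ p * (k + 1) ≠ 0 :=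
        ⟨hp, dvd_mul_right _ _, mul_ne_zero hp.ne_zero (by omega)⟩
      simp only [Function.comp, primeMultipleTerm]
      rw [if_pos hk, one_div_sub_one_div_add (by positivity)]
      push_cast
      field_simp
    · intro m hm
      rw [primeMultipleTerm, if_neg]
      rintro ⟨-, ⟨k, rfl⟩, h0⟩
      apply hm
      have : k ≠ 0 := by rintro rfl; simp at h0
      exact ⟨k - 1, by
        simp only
        rw [Nat.sub_add_cancel (by omega)]⟩
  · rw [if_neg hp]
    have : primeMultipleTerm p = fun _ => 0 := by
      funext m
      rw [primeMultipleTerm, if_neg fun h => hp h.1]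
    rw [this]
    exact hasSum_zero

lemma summable_harmonicGap_div_sq :
    Summable fun p : ℕ => if p.Prime then harmonicGap (1 / p) / (p : ℝ) ^ 2 else 0 := by
  have h : Summable fun p : ℕ => 2 * (1 / (p : ℝ) ^ 2) :=
    (Real.summable_one_div_nat_pow.mpr one_lt_two).mul_left 2
  refine Summable.of_nonneg_of_le (fun p => ?_) (fun p => ?_) h
  all_goals
    split_ifs with hp
    · have hp1 : (1 : ℝ) ≤ p := by exact_mod_cast hp.one_le
      have h0 : (0 : ℝ) ≤ 1 / p := by positivity
      have h1 : (1 : ℝ) / p ≤ 1 := by rw [div_le_one (by linarith)]; exact hp1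
      have h2 := harmonicGap_nonneg h0 h1
      have h3 := harmonicGap_le h0
      first
        | positivity
        | rw [mul_one_div]
          gcongr
          linarith
    · positivity

lemma hasSum_primeMultipleTerm_left (m : ℕ) :
    HasSum (fun p => primeMultipleTerm p m) (idConvPrimeIndicator m / ((m : ℝ) ^ 2 * (m + 1))) := by
  rcases Nat.eq_zero_or_pos m with rfl | hm
  · simp [primeMultipleTerm, idConvPrimeIndicator, hasSum_zero]
  have hm0 : (m : ℝ) ≠ 0 := by exact_mod_cast hm.ne'
  have e : idConvPrimeIndicator m / ((m : ℝ) ^ 2 * (m + 1))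
      = ∑ p ∈ m.divisors.filter Nat.Prime, primeMultipleTerm p m := by
    rw [show (m : ℝ) ^ 2 * (m + 1) = m * (m * (m + 1)) by ring, ← div_div,
      idConvPrimeIndicator_div, sum_div]
    refine sum_congr rfl fun p hp => ?_
    rw [mem_filter, Nat.mem_divisors] at hp
    rw [primeMultipleTerm, if_pos ⟨hp.2, hp.1⟩, div_div]
  rw [e]
  refine hasSum_sum_of_ne_finset_zero fun p hp => ?_
  rw [primeMultipleTerm, if_neg]
  rintro ⟨h1, h2, h3⟩
  exact hp (mem_filter.mpr ⟨Nat.mem_divisors.mpr ⟨h2, h3⟩, h1⟩)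

lemma tsum_idConvPrimeIndicator_div :
    ∑' m : ℕ, idConvPrimeIndicator m / ((m : ℝ) ^ 2 * (m + 1))
      = ∑' p : ℕ, if p.Prime then harmonicGap (1 / p) / (p : ℝ) ^ 2 else 0 := by
  have hsum : Summable (Function.uncurry primeMultipleTerm) := by
    rw [summable_prod_of_nonneg]
    · refine ⟨fun p => (hasSum_primeMultipleTerm p).summable, ?_⟩
      simp only [Function.uncurry_apply_pair, (hasSum_primeMultipleTerm _).tsum_eq]
      exact summable_harmonicGap_div_sq
    · rintro ⟨p, m⟩
      simp only [Function.uncurry_apply_pair, primeMultipleTerm, Pi.zero_apply]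
      split_ifs <;> positivity
  have h := hsum.tsum_comm
  simp only [(hasSum_primeMultipleTerm _).tsum_eq,
    (hasSum_primeMultipleTerm_left _).tsum_eq] at h
  exact h

lemma sum_idConvPrimeIndicator_div_floor {x : ℝ} (hx : 0 ≤ x) :
    HasSum (fun p : ℕ => if p.Prime then
        (#{n ∈ Icc 1 ⌊x⌋₊ | p ∣ ⌊x / (n : ℕ)⌋₊} : ℝ) / p else 0)
      (∑ n ∈ Icc 1 ⌊x⌋₊, idConvPrimeIndicator ⌊x / (n : ℝ)⌋₊ / (⌊x / (n : ℝ)⌋₊ : ℝ)) := by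
  have hterm : ∀ n ∈ Icc 1 ⌊x⌋₊, HasSum
      (fun p : ℕ => if p.Prime ∧ p ∣ ⌊x / (n : ℝ)⌋₊ then 1 / (p : ℝ) else 0)
      (idConvPrimeIndicator ⌊x / (n : ℝ)⌋₊ / (⌊x / (n : ℝ)⌋₊ : ℝ)) := by
    intro n hn
    rw [mem_Icc] at hn
    have hn0 : (0 : ℝ) < n := by exact_mod_cast hn.1
    have hm : ⌊x / (n : ℝ)⌋₊ ≠ 0 := by
      rw [← Nat.one_le_iff_ne_zero, Nat.one_le_floor_iff, one_le_div hn0]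
      exact (Nat.le_floor_iff hx).mp hn.2
    have e : idConvPrimeIndicator ⌊x / (n : ℝ)⌋₊ / (⌊x / (n : ℝ)⌋₊ : ℝ)
        = ∑ p ∈ ⌊x / (n : ℝ)⌋₊.divisors.filter Nat.Prime,
          if p.Prime ∧ p ∣ ⌊x / (n : ℝ)⌋₊ then 1 / (p : ℝ) else 0 := by
      rw [idConvPrimeIndicator_div]
      refine sum_congr rfl fun p hp => ?_
      rw [mem_filter, Nat.mem_divisors] at hp
      rw [if_pos ⟨hp.2, hp.1.1⟩]
    rw [e]
    refine hasSum_sum_of_ne_finset_zero fun p hp => if_neg ?_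
    rintro ⟨h1, h2⟩
    exact hp (mem_filter.mpr ⟨Nat.mem_divisors.mpr ⟨h2, hm⟩, h1⟩)
  convert! hasSum_sum hterm using 1
  funext p
  by_cases hp : p.Prime
  · simp only [hp, true_and, if_true]
    rw [← sum_boole, sum_div]
    refine sum_congr rfl fun n _ => ?_
    split_ifs <;> simp
  · simp [hp]

/-- For `f = id ∗ 1_P`,
`∑_{n ≤ x} f(⌊x/n⌋)/⌊x/n⌋ = x ∑_{m ≥ 1} f(m)/(m²(m+1)) + O(x^{1/3} log x)`. -/
theorem sum_idConvPrimeIndicator_ratio_floor_div :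
    (fun x : ℝ =>
        (∑ n ∈ Finset.Icc 1 ⌊x⌋₊,
          idConvPrimeIndicator ⌊x / (n : ℝ)⌋₊ / (⌊x / (n : ℝ)⌋₊ : ℝ)) -
        x * ∑' m : ℕ, idConvPrimeIndicator m / (m ^ 2 * (m + 1)))
    =O[atTop] fun x : ℝ => x ^ ((1 : ℝ) / 3) * Real.log x := by
  have hS : Summable fun p : ℕ => ((p : ℝ) ^ ((4 : ℝ) / 3))⁻¹ :=
    Real.summable_nat_rpow_inv.mpr (by norm_num)
  refine Asymptotics.IsBigO.of_bound (12003 * ∑' p : ℕ, ((p : ℝ) ^ ((4 : ℝ) / 3))⁻¹) ?_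
  filter_upwards [eventually_ge_atTop (3 : ℝ)] with x hx
  have hx0 : 0 ≤ x := by linarith
  have hlog : 0 ≤ Real.log x := Real.log_nonneg (by linarith)
  have hB : 0 ≤ x ^ ((1 : ℝ) / 3) * Real.log x := mul_nonneg (Real.rpow_nonneg hx0 _) hlog
  have hdiff := (sum_idConvPrimeIndicator_div_floor hx0).sub
    (summable_harmonicGap_div_sq.hasSum.mul_left x)
  rw [tsum_idConvPrimeIndicator_div, ← hdiff.tsum_eq, Real.norm_of_nonneg hB]
  have hbound := hS.hasSum.mul_left (12003 * (x ^ ((1 : ℝ) / 3) * Real.log x))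
  refine (tsum_of_norm_bounded hbound fun p => ?_).trans (le_of_eq (by ring))
  by_cases hp : p.Prime
  · have hp0 : (0 : ℝ) < p := by exact_mod_cast hp.pos
    have h := abs_card_dvd_floor_div_sub_le hx hp.two_le
    rw [if_pos hp, if_pos hp, Real.norm_eq_abs]
    have e : (#{n ∈ Icc 1 ⌊x⌋₊ | p ∣ ⌊x / (n : ℕ)⌋₊} : ℝ) / p
        - x * (harmonicGap (1 / p) / (p : ℝ) ^ 2)
        = ((#{n ∈ Icc 1 ⌊x⌋₊ | p ∣ ⌊x / (n : ℕ)⌋₊} : ℝ) - x / p * harmonicGap (1 / p)) / p := by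
      field_simp
    rw [e, abs_div, abs_of_pos hp0, div_le_iff₀ hp0]
    refine h.trans (le_of_eq ?_)
    rw [Real.div_rpow hx0 hp0.le, show (4 : ℝ) / 3 = 1 / 3 + 1 by norm_num,
      Real.rpow_add hp0, Real.rpow_one]
    field_simp
  · rw [if_neg hp, if_neg hp]
    simp only [mul_zero, sub_zero, norm_zero]
    positivity
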